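/- arXiv:1905.04441 — 4 statements merged into one kernel-verified Lean document; each statement's English description precedes it below -/
import Mathlib

section
/- The composition of the sampling matrix with the synthesis matrix is diagonal: S^* A = (D diag(s) U^*)(U diag(a) D^T) equals the K×K diagonal matrix with i-th diagonal entry R̃_{sa}(i) = Σ_{ℓ=0}^{M−1} s(i+Kℓ) a(i+Kℓ). -/
open Matrix BigOperators

noncomputable section

/-- Downsampling matrix `D ∈ ℂ^{K×N}` with `N = M·K`: `D i j = 1` iff `j ≡ i (mod K)`. -/
def Dmat (K M : ℕ) : Matrix (Fin K) (Fin (M * K)) ℂ :=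
  Matrix.of fun i j => if (j : ℕ) % K = (i : ℕ) then 1 else 0

/-- The index `i + K·ℓ` viewed in `Fin (M·K)`. -/
def fold (K M : ℕ) (i : Fin K) (ℓ : Fin M) : Fin (M * K) :=
  ⟨(i : ℕ) + K * (ℓ : ℕ), by
    have hi := i.isLt
    calc (i : ℕ) + K * (ℓ : ℕ) < K + K * (ℓ : ℕ) := by omega
      _ = K * ((ℓ : ℕ) + 1) := by ring
      _ ≤ K * M := Nat.mul_le_mul_left K ℓ.isLt
      _ = M * K := Nat.mul_comm K M⟩

/-- Sampled cross-correlation `R̃_{fg}(i) = ∑_{ℓ<M} f(i+Kℓ) g(i+Kℓ)`. -/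
def Rtil (K M : ℕ) (f g : Fin (M * K) → ℝ) (i : Fin K) : ℝ :=
  ∑ ℓ : Fin M, f (fold K M i ℓ) * g (fold K M i ℓ)

/-- Sampling matrix `S^* = D diag(s) U^*`. -/
def SamplingMat (K M : ℕ) (U : Matrix (Fin (M * K)) (Fin (M * K)) ℂ)
    (s : Fin (M * K) → ℝ) : Matrix (Fin K) (Fin (M * K)) ℂ :=
  Dmat K M * Matrix.diagonal (fun j => (s j : ℂ)) * Uᴴ

/-- Synthesis matrix `A = U diag(a) Dᵀ`. -/
def SynthesisMat (K M : ℕ) (U : Matrix (Fin (M * K)) (Fin (M * K)) ℂ)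
    (a : Fin (M * K) → ℝ) : Matrix (Fin (M * K)) (Fin K) ℂ :=
  U * Matrix.diagonal (fun j => (a j : ℂ)) * (Dmat K M)ᵀ

/-!
In the coordinates `(ℓ, i) ↦ i + K ℓ` on `Fin (M * K)`, the downsampling matrix is the incidence
matrix of the projection `(ℓ, i) ↦ i`. The factor `Uᴴ U = 1` cancels, and compressing a diagonal
matrix by the incidence matrix of a map sums its diagonal over the fibers of that map, which here
are the residue classes mod `K`.
-/

theorem one_submatrix_mul_diagonal_mul_transpose {m n R : Type*} [Fintype n] [DecidableEq m]
    [DecidableEq n] [NonAssocSemiring R] (p : n → m) (w : n → R) :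
    (1 : Matrix m m R).submatrix id p * diagonal w * ((1 : Matrix m m R).submatrix id p)ᵀ =
      diagonal fun i => ∑ j with p j = i, w j := by
  ext i k
  rw [Matrix.mul_apply]
  simp only [mul_diagonal, transpose_apply, submatrix_apply, id, one_apply]
  rcases eq_or_ne i k with rfl | hik
  · rw [diagonal_apply_eq, Finset.sum_filter]
    refine Finset.sum_congr rfl fun j _ => ?_
    rcases eq_or_ne i (p j) with rfl | hij
    · simp
    · simp [hij, hij.symm]
  · rw [diagonal_apply_ne _ hik]
    refine Finset.sum_eq_zero fun j _ => ?_
    rcases eq_or_ne i (p j) with rfl | hij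
    · rw [if_neg hik.symm, mul_zero]
    · rw [if_neg hij, zero_mul, zero_mul]

theorem fold_eq_finProdFinEquiv {K M : ℕ} (i : Fin K) (ℓ : Fin M) :
    fold K M i ℓ = finProdFinEquiv (ℓ, i) :=
  rfl

theorem modNat_fold {K M : ℕ} (i : Fin K) (ℓ : Fin M) : (fold K M i ℓ).modNat = i :=
  congrArg Prod.snd (finProdFinEquiv.symm_apply_apply (ℓ, i))

theorem sum_filter_modNat_eq_sum_fold {K M : ℕ} {R : Type*} [AddCommMonoid R]
    (f : Fin (M * K) → R) (i : Fin K) :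
    ∑ j with j.modNat = i, f j = ∑ ℓ, f (fold K M i ℓ) := by
  rw [Finset.sum_filter, ← finProdFinEquiv.sum_comp, Fintype.sum_prod_type]
  simp only [← fold_eq_finProdFinEquiv, modNat_fold, Finset.sum_ite_eq', Finset.mem_univ, if_true]

theorem dmat_eq_one_submatrix (K M : ℕ) :
    Dmat K M = (1 : Matrix (Fin K) (Fin K) ℂ).submatrix id Fin.modNat := by
  ext i j
  simp [Dmat, one_apply, Fin.ext_iff, eq_comm]

theorem dmat_mul_diagonal_mul_transpose (K M : ℕ) (w : Fin (M * K) → ℂ) :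
    Dmat K M * diagonal w * (Dmat K M)ᵀ = diagonal fun i => ∑ ℓ, w (fold K M i ℓ) := by
  simp only [dmat_eq_one_submatrix, one_submatrix_mul_diagonal_mul_transpose,
    sum_filter_modNat_eq_sum_fold]

theorem samplingMat_mul_synthesisMat {K M : ℕ} {U : Matrix (Fin (M * K)) (Fin (M * K)) ℂ}
    (hU : U ∈ Matrix.unitaryGroup (Fin (M * K)) ℂ) (s a : Fin (M * K) → ℝ) :
    SamplingMat K M U s * SynthesisMat K M U a =
      Dmat K M * diagonal (fun j => (s j * a j : ℂ)) * (Dmat K M)ᵀ := by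
  have hUU : Uᴴ * U = 1 := mem_unitaryGroup_iff'.mp hU
  calc SamplingMat K M U s * SynthesisMat K M U a
      = Dmat K M * diagonal (fun j => (s j : ℂ)) * (Uᴴ * U) *
          diagonal (fun j => (a j : ℂ)) * (Dmat K M)ᵀ := by
        simp only [SamplingMat, SynthesisMat, Matrix.mul_assoc]
    _ = Dmat K M * diagonal (fun j => (s j * a j : ℂ)) * (Dmat K M)ᵀ := by
        rw [hUU, Matrix.mul_one, Matrix.mul_assoc (Dmat K M), diagonal_mul_diagonal]

/-- The composition of the sampling matrix with the synthesis matrix is diagonal,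
with diagonal entries the sampled cross-correlation `R̃_{sa}`. -/
theorem sampling_mul_synthesis_eq_diagonal (K M : ℕ) (hK : 0 < K) (hM : 0 < M)
    (U : Matrix (Fin (M * K)) (Fin (M * K)) ℂ)
    (hU : U ∈ Matrix.unitaryGroup (Fin (M * K)) ℂ)
    (s a : Fin (M * K) → ℝ) :
    SamplingMat K M U s * SynthesisMat K M U a
      = Matrix.diagonal (fun i : Fin K => (Rtil K M s a i : ℂ)) := by
  rw [samplingMat_mul_synthesisMat hU, dmat_mul_diagonal_mul_transpose]
  simp only [Rtil, Complex.ofReal_sum, Complex.ofReal_mul]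
end
end

section
/- Perfect recovery with a subspace prior (unconstrained, direct-sum case): assume R̃_{sa}(i) ≠ 0 for every i ∈ {0,…,K−1}, and let H ∈ ℂ^{K×K} be the diagonal correction filter with i-th diagonal entry 1/R̃_{sa}(i). Then for every signal x in the PGS subspace generated by a (i.e., x = A d for some d ∈ ℂ^K), the reconstruction A H S^* x equals x. -/
open Matrix BigOperators

noncomputable section

/-!
The residue classes modulo `K` partition the spectral indices, so `D diag(f) Dᵀ` is diagonal and
sums `f` over each class. Since `U^* U = 1`, taking `f = s a` gives `S^* A = diag(R̃_{sa})`, which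
`H` inverts; hence `A H (S^* A) d = A d`.
-/

theorem finProdFinEquiv_eq_fold (K M : ℕ) (i : Fin K) (ℓ : Fin M) :
    finProdFinEquiv (ℓ, i) = fold K M i ℓ :=
  rfl

theorem sum_eq_sum_fold {R : Type*} [AddCommMonoid R] (K M : ℕ) (f : Fin (M * K) → R) :
    ∑ j, f j = ∑ i : Fin K, ∑ ℓ : Fin M, f (fold K M i ℓ) := by
  simp only [← finProdFinEquiv.sum_comp, Fintype.sum_prod_type_right, finProdFinEquiv_eq_fold]

theorem Dmat_apply_fold (K M : ℕ) (i k : Fin K) (ℓ : Fin M) :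
    Dmat K M i (fold K M k ℓ) = if k = i then 1 else 0 := by
  simp only [Dmat, fold, Matrix.of_apply, Nat.add_mul_mod_self_left, Nat.mod_eq_of_lt k.isLt,
    Fin.ext_iff]

theorem Dmat_mul_diagonal_mul_transpose (K M : ℕ) (f : Fin (M * K) → ℂ) :
    Dmat K M * diagonal f * (Dmat K M)ᵀ = diagonal fun i => ∑ ℓ, f (fold K M i ℓ) := by
  ext i k
  calc (Dmat K M * diagonal f * (Dmat K M)ᵀ) i k
      = ∑ j, Dmat K M i j * f j * Dmat K M k j := by
        simp only [mul_apply (N := (Dmat K M)ᵀ), mul_diagonal, transpose_apply]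
    _ = ∑ p, ∑ ℓ, (if p = i then 1 else 0) * f (fold K M p ℓ) * (if p = k then 1 else 0) := by
        simp only [sum_eq_sum_fold, Dmat_apply_fold]
    _ = diagonal (fun i => ∑ ℓ, f (fold K M i ℓ)) i k := by
        rcases eq_or_ne i k with rfl | hik
        · simp
        · simp [hik, hik.symm]

theorem SamplingMat_mul_SynthesisMat {K M : ℕ} {U : Matrix (Fin (M * K)) (Fin (M * K)) ℂ}
    (hU : U ∈ unitaryGroup (Fin (M * K)) ℂ) (s a : Fin (M * K) → ℝ) :
    SamplingMat K M U s * SynthesisMat K M U a = diagonal fun i => (Rtil K M s a i : ℂ) := by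
  have hUU : Uᴴ * U = 1 := mem_unitaryGroup_iff'.mp hU
  calc SamplingMat K M U s * SynthesisMat K M U a
      = Dmat K M * diagonal (fun j => (s j : ℂ)) * (Uᴴ * U) *
          diagonal (fun j => (a j : ℂ)) * (Dmat K M)ᵀ := by
        simp only [SamplingMat, SynthesisMat, Matrix.mul_assoc]
    _ = Dmat K M * diagonal (fun j => (s j * a j : ℂ)) * (Dmat K M)ᵀ := by
        rw [hUU, Matrix.mul_one, Matrix.mul_assoc (Dmat K M), diagonal_mul_diagonal]
    _ = diagonal fun i => (Rtil K M s a i : ℂ) := by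
        simp only [Dmat_mul_diagonal_mul_transpose, Rtil, Complex.ofReal_sum, Complex.ofReal_mul]

theorem diagonal_inv_mul_diagonal_eq_one {n F : Type*} [Fintype n] [DecidableEq n]
    [DivisionSemiring F] {r : n → F} (hr : ∀ i, r i ≠ 0) :
    diagonal (fun i => (r i)⁻¹) * diagonal r = 1 := by
  simp only [diagonal_mul_diagonal, inv_mul_cancel₀ (hr _), diagonal_one]

/-- Perfect recovery with a subspace prior (unconstrained, direct-sum case):
if `R̃_{sa}(i) ≠ 0` for all `i`, the diagonal correction filter `H = diag(1/R̃_{sa})`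
gives `A H S^* x = x` for every `x` in the PGS subspace generated by `a`. -/
theorem subspace_prior_perfect_recovery (K M : ℕ) (hK : 0 < K) (hM : 0 < M)
    (U : Matrix (Fin (M * K)) (Fin (M * K)) ℂ)
    (hU : U ∈ Matrix.unitaryGroup (Fin (M * K)) ℂ)
    (s a : Fin (M * K) → ℝ)
    (hR : ∀ i : Fin K, Rtil K M s a i ≠ 0) :
    ∀ x : Fin (M * K) → ℂ,
      (∃ d : Fin K → ℂ, x = (SynthesisMat K M U a).mulVec d) →
      (SynthesisMat K M U a).mulVec
        ((Matrix.diagonal (fun i : Fin K => ((Rtil K M s a i : ℂ))⁻¹)).mulVec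
          ((SamplingMat K M U s).mulVec x)) = x := by
  rintro _ ⟨d, rfl⟩
  have hH : diagonal (fun i => (Rtil K M s a i : ℂ)⁻¹) *
      (SamplingMat K M U s * SynthesisMat K M U a) = 1 := by
    rw [SamplingMat_mul_SynthesisMat hU]
    exact diagonal_inv_mul_diagonal_eq_one fun i => Complex.ofReal_ne_zero.mpr (hR i)
  rw [mulVec_mulVec d (SamplingMat K M U s), mulVec_mulVec d, hH, one_mulVec]
end
end

section
/- Direct-sum condition is equivalent to invertibility of the sampled Gram matrix: let A, S ∈ ℂ^{N×K} be matrices whose associated linear maps ℂ^K → ℂ^N are injective. Then ℂ^N is the (internal) direct sum of the column space of A and the orthogonal complement of the column space of S (i.e., these two subspaces intersect trivially and together span ℂ^N) if and only if the K×K matrix S^* A is invertible, where S^* is the conjugate transpose of S and ℂ^N carries the standard Hermitian inner product. -/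
open Matrix BigOperators

noncomputable section

/-! Since `(range S)ᗮ = ker S^*`, the two subspaces are `range A` and `ker S^*`. When `A` is
injective, they meet trivially iff `S^* A` is injective, and they span as soon as `S^* A` is
surjective. As `S^* A` acts on a finite-dimensional space, its injectivity already makes it
bijective. -/

section Module

variable {R M N P : Type*} [Ring R] [AddCommGroup M] [AddCommGroup N] [AddCommGroup P]
  [Module R M] [Module R N] [Module R P]

theorem disjoint_range_ker_iff_injective_comp {f : M →ₗ[R] N} (hf : Function.Injective f)
    (g : N →ₗ[R] P) :
    Disjoint (LinearMap.range f) (LinearMap.ker g) ↔ Function.Injective (g ∘ₗ f) := by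
  rw [LinearMap.disjoint_ker_iff_injOn, LinearMap.coe_range, LinearMap.coe_comp]
  exact ⟨fun hg ↦ hg.injective_iff _ subset_rfl |>.mpr hf, Function.Injective.injOn_range⟩

theorem codisjoint_range_ker_of_surjective_comp {f : M →ₗ[R] N} {g : N →ₗ[R] P}
    (hgf : Function.Surjective (g ∘ₗ f)) :
    Codisjoint (LinearMap.range f) (LinearMap.ker g) := by
  have hg : Function.Surjective g := .of_comp hgf
  rw [← Submodule.map_eq_range_iff, ← LinearMap.range_comp, LinearMap.range_eq_top.mpr hgf,
    LinearMap.range_eq_top.mpr hg]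

theorem isCompl_range_ker_iff_isUnit_comp [IsArtinian R M] {f : M →ₗ[R] N}
    (hf : Function.Injective f) (g : N →ₗ[R] M) :
    IsCompl (LinearMap.range f) (LinearMap.ker g) ↔ IsUnit (g ∘ₗ f : Module.End R M) := by
  rw [Module.End.isUnit_iff, isCompl_iff, disjoint_range_ker_iff_injective_comp hf]
  constructor
  · rintro ⟨hinj, -⟩
    exact IsArtinian.bijective_of_injective_endomorphism _ hinj
  · rintro ⟨hinj, hsurj⟩
    exact ⟨hinj, codisjoint_range_ker_of_surjective_comp hsurj⟩

end Module

section RCLike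

variable {𝕜 : Type*} [RCLike 𝕜]

theorem isCompl_range_orthogonal_range_iff_isUnit_adjoint_comp {E F : Type*}
    [NormedAddCommGroup E] [InnerProductSpace 𝕜 E] [FiniteDimensional 𝕜 E]
    [NormedAddCommGroup F] [InnerProductSpace 𝕜 F] [FiniteDimensional 𝕜 F]
    {A : E →ₗ[𝕜] F} (hA : Function.Injective A) (S : E →ₗ[𝕜] F) :
    IsCompl (LinearMap.range A) (LinearMap.range S)ᗮ ↔
      IsUnit (LinearMap.adjoint S ∘ₗ A : Module.End 𝕜 E) := by
  rw [LinearMap.orthogonal_range, isCompl_range_ker_iff_isUnit_comp hA]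

variable {m n : Type*} [Fintype m] [Fintype n] [DecidableEq n]

theorem isUnit_toEuclideanLin_iff {B : Matrix n n 𝕜} :
    IsUnit (Matrix.toEuclideanLin B : Module.End 𝕜 (EuclideanSpace 𝕜 n)) ↔ IsUnit B :=
  isUnit_map_iff (Matrix.toLpLinAlgEquiv 2) B

theorem toEuclideanLin_conjTranspose_mul (S A : Matrix m n 𝕜) :
    Matrix.toEuclideanLin (Sᴴ * A) =
      LinearMap.adjoint (Matrix.toEuclideanLin S) ∘ₗ Matrix.toEuclideanLin A := by
  classical
  rw [← Matrix.toEuclideanLin_conjTranspose_eq_adjoint, Matrix.toLpLin_mul_same]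

theorem directSum_iff_isUnit_gram_general (A S : Matrix m n 𝕜)
    (hA : Function.Injective (Matrix.toEuclideanLin A)) :
    IsCompl (LinearMap.range (Matrix.toEuclideanLin A))
        (LinearMap.range (Matrix.toEuclideanLin S))ᗮ ↔
      IsUnit (Sᴴ * A) := by
  rw [isCompl_range_orthogonal_range_iff_isUnit_adjoint_comp hA,
    ← toEuclideanLin_conjTranspose_mul, isUnit_toEuclideanLin_iff]

end RCLike

/-- The direct-sum condition `ℂ^N = range(A) ⊕ (range S)ᗮ` is equivalent to
invertibility of the sampled Gram matrix `S^* A`. -/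
theorem directSum_iff_isUnit_gram (N K : ℕ) (A S : Matrix (Fin N) (Fin K) ℂ)
    (hA : Function.Injective (Matrix.toEuclideanLin A))
    (hS : Function.Injective (Matrix.toEuclideanLin S)) :
    ((LinearMap.range (Matrix.toEuclideanLin A)
        ⊓ (LinearMap.range (Matrix.toEuclideanLin S))ᗮ = ⊥)
      ∧ (LinearMap.range (Matrix.toEuclideanLin A)
        ⊔ (LinearMap.range (Matrix.toEuclideanLin S))ᗮ = ⊤))
    ↔ IsUnit (Sᴴ * A) := by
  rw [← directSum_iff_isUnit_gram_general A S hA, isCompl_iff, disjoint_iff, codisjoint_iff]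
end
end

section
/- The smoothness prior does not affect the predefined least-squares solution: let W, S ∈ ℂ^{N×K} with S^* W invertible, and let Q ∈ ℂ^{K×K} be any invertible matrix (e.g., Q = W^* V^* V W for an invertible smoothness operator V). Then S^* W Q^{−1} W^* S is invertible and (W Q^{−1} W^* S)(S^* W Q^{−1} W^* S)^{−1} S^* = W (S^* W)^{−1} S^*. In particular, the constrained least-squares reconstruction with smoothness prior coincides with the constrained least-squares reconstruction with subspace prior and is independent of V. -/
open Matrix BigOperators

noncomputable section

section

variable {n k R : Type*} [Fintype n] [Fintype k] [DecidableEq k]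

theorem isUnit_conjTranspose_mul_comm [Semiring R] [StarRing R] {A B : Matrix n k R} :
    IsUnit (Aᴴ * B) ↔ IsUnit (Bᴴ * A) := by
  rw [← isUnit_conjTranspose, conjTranspose_mul, conjTranspose_conjTranspose]

variable [CommRing R]

/- When `A * W` is invertible, `W * (A * W)⁻¹ * A` is the oblique projection onto the range
of `W` along the kernel of `A`. It depends on `W` only through that range, which right
multiplication by an invertible `P` preserves. The smoothness prior is such a
change of `W`, with `P = Q⁻¹ * (Wᴴ * S)`. -/
theorem mul_mul_inv_mul_mul_of_isUnit (A : Matrix k n R) (W : Matrix n k R) {P : Matrix k k R}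
    (hP : IsUnit P) : W * P * (A * (W * P))⁻¹ = W * (A * W)⁻¹ :=
  calc W * P * (A * (W * P))⁻¹ = W * P * (A * W * P)⁻¹ := by rw [Matrix.mul_assoc A]
    _ = W * (P * (P⁻¹ * (A * W)⁻¹)) := by rw [Matrix.mul_inv_rev, Matrix.mul_assoc W]
    _ = W * (A * W)⁻¹ := by
      rw [mul_nonsing_inv_cancel_left P _ ((isUnit_iff_isUnit_det P).mp hP)]

theorem predefined_ls_independent_of_smoothness_general [StarRing R] {W S : Matrix n k R}
    (hSW : IsUnit (Sᴴ * W)) {Q : Matrix k k R} (hQ : IsUnit Q) :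
    IsUnit (Sᴴ * W * Q⁻¹ * Wᴴ * S)
    ∧ (W * Q⁻¹ * Wᴴ * S) * (Sᴴ * W * Q⁻¹ * Wᴴ * S)⁻¹ * Sᴴ
        = W * (Sᴴ * W)⁻¹ * Sᴴ := by
  have hP : IsUnit (Q⁻¹ * (Wᴴ * S)) :=
    (isUnit_nonsing_inv_iff.mpr hQ).mul (isUnit_conjTranspose_mul_comm.mp hSW)
  constructor
  · simpa only [Matrix.mul_assoc] using hSW.mul hP
  · have hproj := mul_mul_inv_mul_mul_of_isUnit Sᴴ W hP
    simp only [← Matrix.mul_assoc] at hproj ⊢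
    rw [hproj]

end

/-- The smoothness prior does not affect the predefined least-squares solution:
for any invertible `Q`, the constrained least-squares reconstruction operator
`(W Q⁻¹ W^* S)(S^* W Q⁻¹ W^* S)⁻¹ S^*` equals `W (S^* W)⁻¹ S^*`. -/
theorem predefined_ls_independent_of_smoothness (N K : ℕ)
    (W S : Matrix (Fin N) (Fin K) ℂ)
    (hSW : IsUnit (Sᴴ * W))
    (Q : Matrix (Fin K) (Fin K) ℂ) (hQ : IsUnit Q) :
    IsUnit (Sᴴ * W * Q⁻¹ * Wᴴ * S)
    ∧ (W * Q⁻¹ * Wᴴ * S) * (Sᴴ * W * Q⁻¹ * Wᴴ * S)⁻¹ * Sᴴ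
        = W * (Sᴴ * W)⁻¹ * Sᴴ :=
  predefined_ls_independent_of_smoothness_general hSW hQ
end
end
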